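/- Fix s ∈ (1/2, 1) and n ∈ ℕ, and let A : ℤ → Matrix (Fin n) (Fin n) ℂ satisfy ∑_{k∈ℤ} (1+|k|)^{2(s−1)} ‖A(k)‖² < ∞. Then the multiplication operator u ↦ A·u is a compact operator from H^s to H^{s−1}: for every sequence of sequences u_m : ℤ → (Fin n → ℂ) with ∑_{k∈ℤ} (1+|k|)^{2s} ‖u_m(k)‖² ≤ C² for all m (for some constant C), the convolutions (A·u_m)(k) := ∑_{h∈ℤ} A(k−h) u_m(h) are well defined (the inner series converge absolutely), and there is a subsequence (m_j) such that ∑_{k∈ℤ} (1+|k|)^{2(s−1)} ‖(A·u_{m_i})(k) − (A·u_{m_j})(k)‖² → 0 as i, j → ∞. -/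

import Mathlib

/-!
In the weighted coordinates that turn `H^s` and `H^{s-1}` into `ℓ²`, multiplication by `A` has
the kernel `⟨k⟩^{s-1} A(k-h) ⟨h⟩^{-s}` with `⟨k⟩ = 1 + |k|`, and this kernel is Hilbert–Schmidt.
The reason is the elementary inequality (`weight_ineq`)
`⟨k⟩^{2s-2} ⟨h⟩^{-2s} ≤ ⟨k-h⟩^{2s-2} (2 ⟨h⟩^{-2s} + ⟨k⟩^{-2s})`,
whose right-hand side, multiplied by `‖A(k-h)‖²`, is summable over `ℤ × ℤ` because
`A ∈ H^{s-1}` and `2s > 1` (`summable_kernel`).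

By Cauchy–Schwarz (`cauchy_schwarz`), `⟨k⟩^{2s-2} ‖(A·u_m)(k)‖² ≤ C² B(k)` with `B` summable
and independent of `m`. Hence all `A·u_m` lie in a product of closed balls, which is sequentially
compact, so a subsequence converges for every frequency `k`; dominated convergence with
the majorant `4 C² B` upgrades this to Cauchyness in the `H^{s-1}`-norm.
-/

open Matrix Filter

attribute [local instance] Matrix.linftyOpNormedAddCommGroup

/-- Comparison of weights for three frequencies with `k = (k - h) + h`; here `x`, `y`, `z` play
the roles of `⟨k⟩`, `⟨h⟩`, `⟨k - h⟩`. -/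
lemma weight_ineq {s x y z : ℝ} (hs1 : 1 / 2 < s) (hs2 : s < 1) (hx : 0 < x) (hy : 0 < y)
    (hz : 0 < z) (hzxy : z ≤ x + y) :
    x ^ (2 * (s - 1)) * y ^ (-(2 * s)) ≤
      z ^ (2 * (s - 1)) * (2 * y ^ (-(2 * s)) + x ^ (-(2 * s))) := by
  have hsub : z ^ (2 - 2 * s) ≤ x ^ (2 - 2 * s) + y ^ (2 - 2 * s) :=
    (Real.rpow_le_rpow hz.le hzxy (by linarith)).trans
      (Real.rpow_add_le_add_rpow hx.le hy.le (by linarith) (by linarith))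
  -- The two exponents are negative with sum `-2s`, so the smaller base dominates.
  have hmix : x ^ (2 * (s - 1)) * y ^ (2 - 4 * s) ≤ y ^ (-(2 * s)) + x ^ (-(2 * s)) := by
    rcases le_total y x with h | h
    · have h1 : x ^ (2 * (s - 1)) ≤ y ^ (2 * (s - 1)) :=
        Real.rpow_le_rpow_of_nonpos hy h (by linarith)
      have h2 : y ^ (2 * (s - 1)) * y ^ (2 - 4 * s) = y ^ (-(2 * s)) := by
        rw [← Real.rpow_add hy]; ring_nf
      have h3 := mul_le_mul_of_nonneg_right h1 (Real.rpow_nonneg hy.le (2 - 4 * s))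
      have h4 := Real.rpow_nonneg hx.le (-(2 * s))
      linarith
    · have h1 : y ^ (2 - 4 * s) ≤ x ^ (2 - 4 * s) :=
        Real.rpow_le_rpow_of_nonpos hx h (by linarith)
      have h2 : x ^ (2 * (s - 1)) * x ^ (2 - 4 * s) = x ^ (-(2 * s)) := by
        rw [← Real.rpow_add hx]; ring_nf
      have h3 := mul_le_mul_of_nonneg_left h1 (Real.rpow_nonneg hx.le (2 * (s - 1)))
      have h4 := Real.rpow_nonneg hy.le (-(2 * s))
      linarith
  have hx1 : x ^ (2 * (s - 1)) * x ^ (2 - 2 * s) = 1 := by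
    rw [← Real.rpow_add hx]; ring_nf; exact Real.rpow_zero x
  have hz1 : z ^ (2 * (s - 1)) * z ^ (2 - 2 * s) = 1 := by
    rw [← Real.rpow_add hz]; ring_nf; exact Real.rpow_zero z
  have hy1 : y ^ (-(2 * s)) * y ^ (2 - 2 * s) = y ^ (2 - 4 * s) := by
    rw [← Real.rpow_add hy]; ring_nf
  have hkey : x ^ (2 * (s - 1)) * y ^ (-(2 * s)) * z ^ (2 - 2 * s) ≤
      2 * y ^ (-(2 * s)) + x ^ (-(2 * s)) := by
    calc x ^ (2 * (s - 1)) * y ^ (-(2 * s)) * z ^ (2 - 2 * s)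
        ≤ x ^ (2 * (s - 1)) * y ^ (-(2 * s)) * (x ^ (2 - 2 * s) + y ^ (2 - 2 * s)) := by gcongr
      _ = (x ^ (2 * (s - 1)) * x ^ (2 - 2 * s)) * y ^ (-(2 * s))
          + x ^ (2 * (s - 1)) * (y ^ (-(2 * s)) * y ^ (2 - 2 * s)) := by ring
      _ ≤ _ := by rw [hx1, hy1]; linarith
  calc x ^ (2 * (s - 1)) * y ^ (-(2 * s))
      = (z ^ (2 * (s - 1)) * z ^ (2 - 2 * s)) * (x ^ (2 * (s - 1)) * y ^ (-(2 * s))) := by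
        rw [hz1, one_mul]
    _ = z ^ (2 * (s - 1)) * (x ^ (2 * (s - 1)) * y ^ (-(2 * s)) * z ^ (2 - 2 * s)) := by ring
    _ ≤ _ := by gcongr

lemma weight_pos (k : ℤ) : (0 : ℝ) < ((1 + |k| : ℤ) : ℝ) := by
  have := abs_nonneg k
  exact_mod_cast (by omega : (0 : ℤ) < 1 + |k|)

lemma summable_weight {s : ℝ} (hs1 : 1 / 2 < s) :
    Summable (fun k : ℤ => ((1 + |k| : ℤ) : ℝ) ^ (-(2 * s))) := by
  have hnat : Summable (fun k : ℕ => ((k + 1 : ℕ) : ℝ) ^ (-(2 * s))) :=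
    (summable_nat_add_iff 1).2 (Real.summable_nat_rpow.2 (by linarith))
  refine Summable.of_nat_of_neg ?_ ?_ <;>
  · refine hnat.congr fun k => ?_
    simp [add_comm]

/-- The kernel of multiplication by a loop with coefficients of norm `a` is Hilbert–Schmidt as
an operator from `H^s` to `H^{s-1}`. -/
lemma summable_kernel {s : ℝ} (hs1 : 1 / 2 < s) (hs2 : s < 1) {a : ℤ → ℝ}
    (ha : Summable (fun k : ℤ => ((1 + |k| : ℤ) : ℝ) ^ (2 * (s - 1)) * a k ^ 2)) :
    Summable (fun p : ℤ × ℤ => ((1 + |p.1| : ℤ) : ℝ) ^ (2 * (s - 1)) *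
      (a (p.1 - p.2) ^ 2 * ((1 + |p.2| : ℤ) : ℝ) ^ (-(2 * s)))) := by
  have hw := summable_weight hs1
  have hprod := ha.mul_of_nonneg hw
    (fun k => mul_nonneg (Real.rpow_nonneg (weight_pos k).le _) (sq_nonneg _))
    (fun k => Real.rpow_nonneg (weight_pos k).le _)
  have h1 := hprod.comp_injective (i := fun p : ℤ × ℤ => (p.1 - p.2, p.2)) (by
    rintro ⟨a, b⟩ ⟨c, d⟩ h
    simp only [Prod.mk.injEq] at h ⊢
    omega)
  have h2 := hprod.comp_injective (i := fun p : ℤ × ℤ => (p.1 - p.2, p.1)) (by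
    rintro ⟨a, b⟩ ⟨c, d⟩ h
    simp only [Prod.mk.injEq] at h ⊢
    omega)
  refine Summable.of_nonneg_of_le (fun p => ?_) (fun p => ?_) ((h1.mul_left 2).add h2)
  · have := Real.rpow_nonneg (weight_pos p.1).le (2 * (s - 1))
    have := Real.rpow_nonneg (weight_pos p.2).le (-(2 * s))
    positivity
  · have htri : ((1 + |p.1 - p.2| : ℤ) : ℝ) ≤ ((1 + |p.1| : ℤ) : ℝ) + ((1 + |p.2| : ℤ) : ℝ) := by
      have := abs_sub p.1 p.2
      exact_mod_cast (by omega : 1 + |p.1 - p.2| ≤ (1 + |p.1|) + (1 + |p.2|))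
    have hkey := mul_le_mul_of_nonneg_right
      (weight_ineq hs1 hs2 (weight_pos p.1) (weight_pos p.2) (weight_pos (p.1 - p.2)) htri)
      (sq_nonneg (a (p.1 - p.2)))
    simp only [Function.comp_apply]
    linarith

lemma cauchy_schwarz {f g : ℤ → ℝ} (hf0 : ∀ k, 0 ≤ f k) (hg0 : ∀ k, 0 ≤ g k)
    (hf : Summable fun k => f k ^ 2) (hg : Summable fun k => g k ^ 2) :
    Summable (fun k => f k * g k) ∧
      (∑' k, f k * g k) ^ 2 ≤ (∑' k, f k ^ 2) * ∑' k, g k ^ 2 := by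
  have h := Real.inner_le_Lp_mul_Lq_tsum_of_nonneg Real.HolderConjugate.two_two hf0 hg0
    (by simpa using hf) (by simpa using hg)
  refine ⟨Real.summable_mul_of_Lp_Lq_of_nonneg Real.HolderConjugate.two_two hf0 hg0
    (by simpa using hf) (by simpa using hg), ?_⟩
  have h2 := h
  simp only [Real.rpow_two, ← Real.sqrt_eq_rpow] at h2
  have hF : 0 ≤ ∑' k, f k ^ 2 := tsum_nonneg fun k => sq_nonneg _
  have hG : 0 ≤ ∑' k, g k ^ 2 := tsum_nonneg fun k => sq_nonneg _
  have h0 : 0 ≤ ∑' k, f k * g k := tsum_nonneg fun k => mul_nonneg (hf0 k) (hg0 k)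
  calc (∑' k, f k * g k) ^ 2 ≤ (√(∑' k, f k ^ 2) * √(∑' k, g k ^ 2)) ^ 2 := by gcongr
    _ = _ := by rw [mul_pow, Real.sq_sqrt hF, Real.sq_sqrt hG]

/-- Fix `s ∈ (1/2, 1)` and let `A : ℤ → Matrix (Fin n) (Fin n) ℂ` satisfy
`∑_k (1+|k|)^{2(s−1)} ‖A(k)‖² < ∞`. Then multiplication by `A` is a compact operator
from `H^s` to `H^{s−1}`: for any `H^s`-bounded sequence `(u_m)` the convolutions
`(A·u_m)(k) = ∑_h A(k−h) u_m(h)` are well defined (the inner series converge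
absolutely) and some subsequence is Cauchy in the `H^{s−1}`-norm. -/
theorem stmt4 (s : ℝ) (hs1 : 1 / 2 < s) (hs2 : s < 1) (n : ℕ)
    (A : ℤ → Matrix (Fin n) (Fin n) ℂ)
    (hA : Summable (fun k : ℤ => ((1 + |k| : ℤ) : ℝ) ^ (2 * (s - 1)) * ‖A k‖ ^ 2))
    (C : ℝ) (u : ℕ → ℤ → (Fin n → ℂ))
    (hu : ∀ m, Summable (fun k : ℤ => ((1 + |k| : ℤ) : ℝ) ^ (2 * s) * ‖u m k‖ ^ 2) ∧
      (∑' k : ℤ, ((1 + |k| : ℤ) : ℝ) ^ (2 * s) * ‖u m k‖ ^ 2) ≤ C ^ 2) :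
    (∀ m, ∀ k : ℤ, Summable (fun h : ℤ => ‖(A (k - h)).mulVec (u m h)‖)) ∧
    ∃ φ : ℕ → ℕ, StrictMono φ ∧
      (∀ i j : ℕ, Summable (fun k : ℤ => ((1 + |k| : ℤ) : ℝ) ^ (2 * (s - 1)) *
        ‖(∑' h : ℤ, (A (k - h)).mulVec (u (φ i) h))
          - (∑' h : ℤ, (A (k - h)).mulVec (u (φ j) h))‖ ^ 2)) ∧
      Tendsto (fun p : ℕ × ℕ =>
          ∑' k : ℤ, ((1 + |k| : ℤ) : ℝ) ^ (2 * (s - 1)) *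
            ‖(∑' h : ℤ, (A (k - h)).mulVec (u (φ p.1) h))
              - (∑' h : ℤ, (A (k - h)).mulVec (u (φ p.2) h))‖ ^ 2)
        atTop (nhds 0) := by
  have hK := summable_kernel hs1 hs2 hA
  -- `B k` is the squared `ℓ²`-norm of the `k`-th row of the kernel.
  set B : ℤ → ℝ := fun k => ∑' h : ℤ, ((1 + |k| : ℤ) : ℝ) ^ (2 * (s - 1)) *
    (‖A (k - h)‖ ^ 2 * ((1 + |h| : ℤ) : ℝ) ^ (-(2 * s))) with hB
  have hBsum : Summable B := hK.prod
  have hmain : ∀ m k, Summable (fun h : ℤ => ‖(A (k - h)).mulVec (u m h)‖) ∧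
      ((1 + |k| : ℤ) : ℝ) ^ (2 * (s - 1)) *
        ‖∑' h : ℤ, (A (k - h)).mulVec (u m h)‖ ^ 2 ≤ C ^ 2 * B k := by
    intro m k
    have hwk : 0 < ((1 + |k| : ℤ) : ℝ) ^ (2 * (s - 1)) := Real.rpow_pos_of_pos (weight_pos k) _
    have hrow : Summable fun h : ℤ => ‖A (k - h)‖ ^ 2 * ((1 + |h| : ℤ) : ℝ) ^ (-(2 * s)) :=
      (summable_mul_left_iff hwk.ne').1 (hK.prod_factor k)
    have hfsq : ∀ h : ℤ, (‖A (k - h)‖ * ((1 + |h| : ℤ) : ℝ) ^ (-s)) ^ 2 =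
        ‖A (k - h)‖ ^ 2 * ((1 + |h| : ℤ) : ℝ) ^ (-(2 * s)) := fun h => by
      rw [mul_pow, sq (_ ^ (-s)), ← Real.rpow_add (weight_pos h)]; ring_nf
    have hgsq : ∀ h : ℤ, (((1 + |h| : ℤ) : ℝ) ^ s * ‖u m h‖) ^ 2 =
        ((1 + |h| : ℤ) : ℝ) ^ (2 * s) * ‖u m h‖ ^ 2 := fun h => by
      rw [mul_pow, sq (_ ^ s), ← Real.rpow_add (weight_pos h)]; ring_nf
    have hfg : ∀ h : ℤ, ‖A (k - h)‖ * ((1 + |h| : ℤ) : ℝ) ^ (-s) *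
        (((1 + |h| : ℤ) : ℝ) ^ s * ‖u m h‖) = ‖A (k - h)‖ * ‖u m h‖ := fun h => by
      have : ((1 + |h| : ℤ) : ℝ) ^ (-s) * ((1 + |h| : ℤ) : ℝ) ^ s = 1 := by
        rw [← Real.rpow_add (weight_pos h)]; simp
      linear_combination ‖A (k - h)‖ * ‖u m h‖ * this
    obtain ⟨hsum, hle⟩ := cauchy_schwarz
      (f := fun h : ℤ => ‖A (k - h)‖ * ((1 + |h| : ℤ) : ℝ) ^ (-s))
      (g := fun h : ℤ => ((1 + |h| : ℤ) : ℝ) ^ s * ‖u m h‖)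
      (fun h => mul_nonneg (norm_nonneg _) (Real.rpow_nonneg (weight_pos h).le _))
      (fun h => mul_nonneg (Real.rpow_nonneg (weight_pos h).le _) (norm_nonneg _))
      (by simpa only [hfsq] using hrow) (by simpa only [hgsq] using (hu m).1)
    simp only [hfsq, hgsq, hfg] at hsum hle
    have hmv : ∀ h : ℤ, ‖(A (k - h)).mulVec (u m h)‖ ≤ ‖A (k - h)‖ * ‖u m h‖ :=
      fun h => Matrix.linfty_opNorm_mulVec _ _
    have hns : Summable (fun h : ℤ => ‖(A (k - h)).mulVec (u m h)‖) :=
      Summable.of_nonneg_of_le (fun _ => norm_nonneg _) hmv hsum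
    refine ⟨hns, ?_⟩
    have hnorm : ‖∑' h : ℤ, (A (k - h)).mulVec (u m h)‖ ≤ ∑' h : ℤ, ‖A (k - h)‖ * ‖u m h‖ :=
      (norm_tsum_le_tsum_norm hns).trans (hns.tsum_le_tsum hmv hsum)
    have hR0 : 0 ≤ ∑' h : ℤ, ‖A (k - h)‖ ^ 2 * ((1 + |h| : ℤ) : ℝ) ^ (-(2 * s)) :=
      tsum_nonneg fun h => mul_nonneg (sq_nonneg _) (Real.rpow_nonneg (weight_pos h).le _)
    calc ((1 + |k| : ℤ) : ℝ) ^ (2 * (s - 1)) * ‖∑' h : ℤ, (A (k - h)).mulVec (u m h)‖ ^ 2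
        ≤ ((1 + |k| : ℤ) : ℝ) ^ (2 * (s - 1)) * (∑' h : ℤ, ‖A (k - h)‖ * ‖u m h‖) ^ 2 := by
          gcongr
      _ ≤ ((1 + |k| : ℤ) : ℝ) ^ (2 * (s - 1)) *
          ((∑' h : ℤ, ‖A (k - h)‖ ^ 2 * ((1 + |h| : ℤ) : ℝ) ^ (-(2 * s))) * C ^ 2) := by
          have := mul_le_mul_of_nonneg_left (hu m).2 hR0
          exact mul_le_mul_of_nonneg_left (hle.trans this) hwk.le
      _ = C ^ 2 * B k := by rw [hB]; simp only [tsum_mul_left]; ring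
  refine ⟨fun m k => (hmain m k).1, ?_⟩
  set F : ℕ → ℤ → (Fin n → ℂ) := fun m k => ∑' h : ℤ, (A (k - h)).mulVec (u m h) with hF
  have hFle : ∀ m k, ((1 + |k| : ℤ) : ℝ) ^ (2 * (s - 1)) * ‖F m k‖ ^ 2 ≤ C ^ 2 * B k :=
    fun m k => (hmain m k).2
  have hcpt : IsCompact (Set.univ.pi fun k : ℤ => Metric.closedBall (0 : Fin n → ℂ)
      √(C ^ 2 * B k / ((1 + |k| : ℤ) : ℝ) ^ (2 * (s - 1)))) :=
    isCompact_univ_pi fun k => isCompact_closedBall _ _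
  obtain ⟨G, -, φ, hφ, hlim⟩ := hcpt.isSeqCompact (x := F) (fun m k _ => by
    rw [mem_closedBall_zero_iff]
    apply Real.le_sqrt_of_sq_le
    rw [le_div_iff₀ (Real.rpow_pos_of_pos (weight_pos k) _), mul_comm]
    exact hFle m k)
  rw [tendsto_pi_nhds] at hlim
  have hdiff : ∀ i j k, ((1 + |k| : ℤ) : ℝ) ^ (2 * (s - 1)) * ‖F i k - F j k‖ ^ 2 ≤
      4 * C ^ 2 * B k := by
    intro i j k
    have hwk : 0 ≤ ((1 + |k| : ℤ) : ℝ) ^ (2 * (s - 1)) := Real.rpow_nonneg (weight_pos k).le _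
    have h1 : ‖F i k - F j k‖ ^ 2 ≤ 2 * ‖F i k‖ ^ 2 + 2 * ‖F j k‖ ^ 2 := by
      have := norm_sub_le (F i k) (F j k)
      nlinarith [norm_nonneg (F i k - F j k), sq_nonneg (‖F i k‖ - ‖F j k‖)]
    have := mul_le_mul_of_nonneg_left h1 hwk
    linarith [hFle i k, hFle j k]
  have hnonneg : ∀ i j k, 0 ≤ ((1 + |k| : ℤ) : ℝ) ^ (2 * (s - 1)) * ‖F i k - F j k‖ ^ 2 :=
    fun i j k => mul_nonneg (Real.rpow_nonneg (weight_pos k).le _) (sq_nonneg _)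
  refine ⟨φ, hφ, fun i j => Summable.of_nonneg_of_le (hnonneg _ _) (hdiff _ _)
    (hBsum.mul_left _), ?_⟩
  rw [← tsum_zero (α := ℝ) (β := ℤ)]
  refine tendsto_tsum_of_dominated_convergence (hBsum.mul_left (4 * C ^ 2)) (fun k => ?_)
    (Eventually.of_forall fun p k => ?_)
  · have h1 : Tendsto (fun p : ℕ × ℕ => F (φ p.1) k) atTop (nhds (G k)) :=
      (hlim k).comp (by rw [← prod_atTop_atTop_eq]; exact tendsto_fst)
    have h2 : Tendsto (fun p : ℕ × ℕ => F (φ p.2) k) atTop (nhds (G k)) :=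
      (hlim k).comp (by rw [← prod_atTop_atTop_eq]; exact tendsto_snd)
    simpa using (((h1.sub h2).norm.pow 2).const_mul (((1 + |k| : ℤ) : ℝ) ^ (2 * (s - 1))))
  · rw [Real.norm_of_nonneg (hnonneg _ _ k)]
    exact hdiff _ _ k
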